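/- arXiv:2307.04627 — 7 statements merged into one kernel-verified Lean document; each statement's English description precedes it below -/
import Mathlib

section
/- Let E and F be Banach spaces, let (I, ≤) be a directed set that contains a countable majorizing subset, and let (T_i)_{i ∈ I} be a family of bounded linear operators from E to F. Let W ⊆ F be a closed vector subspace. If for every x ∈ E there exists i₀ ∈ I such that T_i x ∈ W for all i ≥ i₀, then there exists a single index i₀ ∈ I such that T_i x ∈ W for all i ≥ i₀ and all x ∈ E. -/
/-- Let `E` and `F` be Banach spaces, let `(I, ≤)` be a directed set containing a countable
majorizing subset, and let `(T i)_{i ∈ I}` be a family of bounded linear operators from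
`E` to `F`.  Let `W ⊆ F` be a closed vector subspace.  If for every `x ∈ E` there exists
`i₀` such that `T i x ∈ W` for all `i ≥ i₀`, then `i₀` can be chosen independently of `x`. -/
theorem eventually_mapsInto_closed_subspace_uniformly
    {E F : Type*} [NormedAddCommGroup E] [NormedSpace ℝ E] [CompleteSpace E]
    [NormedAddCommGroup F] [NormedSpace ℝ F] [CompleteSpace F]
    {ι : Type*} [Nonempty ι] [Preorder ι] [IsDirected ι (· ≤ ·)]
    (hmaj : ∃ J : Set ι, J.Countable ∧ ∀ i : ι, ∃ j ∈ J, i ≤ j)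
    (T : ι → E →L[ℝ] F)
    (W : Submodule ℝ F) (hW : IsClosed (W : Set F))
    (hind : ∀ x : E, ∃ i₀ : ι, ∀ i, i₀ ≤ i → T i x ∈ W) :
    ∃ i₀ : ι, ∀ i, i₀ ≤ i → ∀ x : E, T i x ∈ W := by
  obtain ⟨J, hJ, hcof⟩ := hmaj
  have : Countable J := hJ.to_subtype
  let V : J → Submodule ℝ E := fun j => ⨅ (i : ι) (_ : (j : ι) ≤ i), W.comap (T i : E →ₗ[ℝ] F)
  have mem_V (j : J) (x : E) : x ∈ V j ↔ ∀ i, (j : ι) ≤ i → T i x ∈ W := by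
    simp [V, Submodule.mem_iInf]
  have isClosed_V (j : J) : IsClosed (V j : Set E) := by
    have hV : (V j : Set E) = ⋂ (i : ι) (_ : (j : ι) ≤ i), T i ⁻¹' (W : Set F) := by
      ext x
      simp [mem_V]
    rw [hV]
    exact isClosed_iInter fun i => isClosed_iInter fun _ => hW.preimage (T i).continuous
  have iUnion_V : ⋃ j, (V j : Set E) = Set.univ := by
    refine Set.eq_univ_of_forall fun x => ?_
    obtain ⟨i₀, hi₀⟩ := hind x
    obtain ⟨j, hj, hij⟩ := hcof i₀
    exact Set.mem_iUnion.2 ⟨⟨j, hj⟩, (mem_V _ x).2 fun i hi => hi₀ i (hij.trans hi)⟩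
  obtain ⟨j, hj⟩ := nonempty_interior_of_iUnion_of_closed isClosed_V iUnion_V
  have V_eq_top : V j = ⊤ := (V j).eq_top_of_nonempty_interior' hj
  exact ⟨j, fun i hi x => (mem_V j x).1 (V_eq_top ▸ Submodule.mem_top) i hi⟩
end

section
/- Let E be a Banach space, let (I, ≤) be a directed set that contains a countable majorizing subset, and let (T_i)_{i ∈ I} be a family of bounded linear operators on E. Let V ⊆ E be a closed vector subspace. If V is individually eventually invariant under (T_i), i.e., for each v ∈ V there exists i₀ ∈ I such that T_i v ∈ V for all i ≥ i₀, then V is uniformly eventually invariant, i.e., there exists i₀ ∈ I such that T_i V ⊆ V for all i ≥ i₀. -/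
/-- Let `E` be a Banach space, `(I, ≤)` a directed set containing a countable majorizing
subset, and `(T i)_{i ∈ I}` a family of bounded linear operators on `E`.  If a closed
vector subspace `V ⊆ E` is individually eventually invariant under the family, then it
is uniformly eventually invariant. -/
theorem closed_subspace_individually_eventually_invariant_implies_uniformly
    {E : Type*} [NormedAddCommGroup E] [NormedSpace ℝ E] [CompleteSpace E]
    {ι : Type*} [Nonempty ι] [Preorder ι] [IsDirected ι (· ≤ ·)]
    (hmaj : ∃ J : Set ι, J.Countable ∧ ∀ i : ι, ∃ j ∈ J, i ≤ j)
    (T : ι → E →L[ℝ] E)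
    (V : Submodule ℝ E) (hV : IsClosed (V : Set E))
    (hind : ∀ v ∈ V, ∃ i₀ : ι, ∀ i, i₀ ≤ i → T i v ∈ V) :
    ∃ i₀ : ι, ∀ i, i₀ ≤ i → ∀ v ∈ V, T i v ∈ V := by
  obtain ⟨J, hJ, hmaj⟩ := hmaj
  have : Countable J := hJ.to_subtype
  have : CompleteSpace V := hV.completeSpace_coe
  -- `W j` consists of the vectors of `V` that every `T i` with `j ≤ i` sends into `V`.
  let W : J → Submodule ℝ V := fun j =>
    ⨅ i : Set.Ici (j : ι), V.comap ((T i : E →ₗ[ℝ] E) ∘ₗ V.subtype)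
  have mem_W (j : J) (v : V) : v ∈ W j ↔ ∀ i, (j : ι) ≤ i → T i v ∈ V := by
    simp [W, Submodule.mem_iInf]
  have isClosed_W (j : J) : IsClosed (W j : Set V) := by
    have hW : (W j : Set V) = ⋂ (i : ι) (_ : (j : ι) ≤ i), {v : V | T i v ∈ V} := by
      ext v
      simp [mem_W]
    rw [hW]
    exact isClosed_iInter fun i => isClosed_iInter fun _ =>
      hV.preimage ((T i).continuous.comp continuous_subtype_val)
  have iUnion_W : ⋃ j, (W j : Set V) = Set.univ := by
    refine Set.eq_univ_of_forall fun v => Set.mem_iUnion.2 ?_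
    obtain ⟨i₀, hi₀⟩ := hind v v.2
    obtain ⟨j, hj, hij⟩ := hmaj i₀
    exact ⟨⟨j, hj⟩, (mem_W _ _).2 fun i hi => hi₀ i (hij.trans hi)⟩
  obtain ⟨j, hj⟩ := nonempty_interior_of_iUnion_of_closed isClosed_W iUnion_W
  have W_eq_top : W j = ⊤ := (W j).eq_top_of_nonempty_interior' hj
  exact ⟨j, fun i hi v hv => (mem_W j ⟨v, hv⟩).1 (W_eq_top ▸ Submodule.mem_top) i hi⟩
end

section
/- Let E be a Banach space, let I be a non-empty set, and for each i ∈ I let V_i ⊆ E be a vector subspace equipped with a complete norm ‖·‖_i under which the inclusion map V_i → E is continuous; moreover, for each i ∈ I let c_i > 0 be a real number. Then the vector subspace V := { v ∈ ⋂_{i ∈ I} V_i : ‖v‖_V := sup_{i ∈ I} c_i ‖v‖_i < ∞ }, equipped with the norm ‖·‖_V, is a Banach space and the inclusion map V → E is continuous; in particular, V is an operator range in E. -/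
universe u

/-- A witness that the set `S ⊆ E`, together with the norm function `nrm` (whose values
matter only on `S`), is an *operator range* in `E`: there is a Banach space `F` and an
injective bounded linear map `k : F → E` with range exactly `S`, such that the norm of
`F` is transported to `nrm` on `S`.  This expresses that `S` is a vector subspace of `E`
carrying the complete norm `nrm` under which the inclusion `S → E` is continuous. -/
structure OperatorRangeWitness (E : Type u) [NormedAddCommGroup E] [NormedSpace ℝ E]
    (S : Set E) (nrm : E → ℝ) : Type (u + 1) where
  F : Type u
  [grp : NormedAddCommGroup F]
  [mod : NormedSpace ℝ F]
  [cpl : CompleteSpace F]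
  k : F →L[ℝ] E
  inj : Function.Injective k
  range_eq : Set.range k = S
  norm_eq : ∀ f : F, ‖f‖ = nrm (k f)

/-- An injective bounded linear map from a Banach space in any universe makes its range an
operator range for the transported norm. -/
theorem OperatorRangeWitness.nonempty_of_injective
    {E : Type u} [NormedAddCommGroup E] [NormedSpace ℝ E]
    {F : Type*} [NormedAddCommGroup F] [NormedSpace ℝ F] [CompleteSpace F]
    {S : Set E} {nrm : E → ℝ} (k : F →L[ℝ] E) (hinj : Function.Injective k)
    (hrange : Set.range k = S) (hnorm : ∀ f, ‖f‖ = nrm (k f)) :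
    Nonempty (OperatorRangeWitness E S nrm) := by
  have : Small.{u} F := small_of_injective hinj
  let e : Shrink.{u} F ≃ₗᵢ[ℝ] F := ⟨Shrink.linearEquiv ℝ F, fun _ => rfl⟩
  have : CompleteSpace (Shrink.{u} F) := e.toIsometryEquiv.completeSpace
  exact ⟨{
    F := Shrink.{u} F
    k := k.comp (e.toContinuousLinearEquiv : Shrink.{u} F →L[ℝ] F)
    inj := hinj.comp e.injective
    range_eq := (e.surjective.range_comp k).trans hrange
    norm_eq := fun f => (e.norm_map f).symm.trans (hnorm (e f)) }⟩

attribute [instance] OperatorRangeWitness.grp OperatorRangeWitness.mod OperatorRangeWitness.cpl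

/-- Let `E` be a Banach space, `I` a non-empty index set and, for each `i ∈ I`, let
`Vset i ⊆ E` be a vector subspace equipped with a complete norm `n i` making the
inclusion `Vset i → E` continuous, and let `c i > 0`.  Then the subspace
`V = { v ∈ ⋂ i, Vset i : sup_i c i * n i v < ∞ }`, equipped with the norm
`v ↦ ⨆ i, c i * n i v`, is a Banach space whose inclusion into `E` is continuous;
in particular it is an operator range in `E`. -/
theorem intersection_of_operator_ranges
    {E : Type u} [NormedAddCommGroup E] [NormedSpace ℝ E] [CompleteSpace E]
    {I : Type*} [Nonempty I]
    (Vset : I → Set E) (n : I → E → ℝ)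
    (c : I → ℝ) (hc : ∀ i, 0 < c i)
    (w : ∀ i, OperatorRangeWitness E (Vset i) (n i)) :
    Nonempty (OperatorRangeWitness E
      {v : E | (∀ i, v ∈ Vset i) ∧ BddAbove (Set.range fun i => c i * n i v)}
      (fun v => ⨆ i, c i * n i v)) := by
  have i₀ : I := Classical.arbitrary I
  let g : ∀ i, lp (fun i => (w i).F) ⊤ →L[ℝ] E := fun i =>
    (c i)⁻¹ • (w i).k.comp (lp.evalCLM ℝ (fun i => (w i).F) ⊤ i)
  have hg : ∀ i f, g i f = (w i).k ((c i)⁻¹ • f i) := fun i f =>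
    ((w i).k.map_smul (c i)⁻¹ (f i)).symm
  -- the bounded families whose rescaled components all represent the same vector of `E`
  let T : Submodule ℝ (lp (fun i => (w i).F) ⊤) := ⨅ i, (g i - g i₀).ker
  have hT : ∀ f, f ∈ T ↔ ∀ i, g i f = g i₀ f := fun f => by
    simp [T, Submodule.mem_iInf, sub_eq_zero]
  have hTclosed : IsClosed (T : Set (lp (fun i => (w i).F) ⊤)) := by
    rw [Submodule.coe_iInf]
    exact isClosed_iInter fun i => (g i - g i₀).isClosed_ker
  have : CompleteSpace T := hTclosed.completeSpace_coe
  have hnorm : ∀ f ∈ T, ∀ i, ‖f i‖ = c i * n i (g i₀ f) := fun f hf i => by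
    rw [← (hT f).1 hf i, hg, ← (w i).norm_eq, norm_smul, norm_inv, Real.norm_of_nonneg (hc i).le,
      mul_inv_cancel_left₀ (hc i).ne']
  refine OperatorRangeWitness.nonempty_of_injective ((g i₀).comp T.subtypeL) ?_ ?_ ?_
  · rintro ⟨f, hf⟩ ⟨f', hf'⟩ h
    have h : g i₀ f = g i₀ f' := h
    refine Subtype.ext (lp.ext (funext fun i => ?_))
    rw [← (hT f).1 hf i, ← (hT f').1 hf' i, hg, hg] at h
    exact smul_right_injective _ (inv_ne_zero (hc i).ne') ((w i).inj h)
  · ext v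
    constructor
    · rintro ⟨⟨f, hf⟩, rfl⟩
      change (∀ i, g i₀ f ∈ Vset i) ∧ BddAbove (Set.range fun i => c i * n i (g i₀ f))
      refine ⟨fun i => ?_, ?_⟩
      · rw [← (hT f).1 hf i, hg]
        exact (w i).range_eq.subset (Set.mem_range_self _)
      · simpa only [hnorm f hf] using memℓp_infty_iff.1 (lp.memℓp f)
    · rintro ⟨hv, hbdd⟩
      choose x hx using fun i => (w i).range_eq.superset (hv i)
      have hnx : ∀ i, ‖c i • x i‖ = c i * n i v := fun i => by
        rw [norm_smul, Real.norm_of_nonneg (hc i).le, (w i).norm_eq, hx]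
      have hmem : Memℓp (fun i => c i • x i) ⊤ :=
        memℓp_infty (by simpa only [hnx] using hbdd)
      let f : lp (fun i => (w i).F) ⊤ := ⟨fun i => c i • x i, hmem⟩
      have hgf : ∀ i, g i f = v := fun i => by
        rw [hg, ← hx i]
        exact congrArg _ (inv_smul_smul₀ (hc i).ne' (x i))
      exact ⟨⟨f, (hT f).2 fun i => (hgf i).trans (hgf i₀).symm⟩, hgf i₀⟩
  · rintro ⟨f, hf⟩
    exact (lp.norm_eq_ciSup f).trans (iSup_congr (hnorm f hf))
end

section
/- Let E and F be Banach spaces, let (I, ≤) be a directed set that contains a countable majorizing subset, and let (T_i)_{i ∈ I} be a family of bounded linear operators from E to F. Let W ⊆ F be an operator range, endowed with a complete norm ‖·‖_W making the inclusion W → F continuous. Then the following are equivalent: (i) there exists i₀ ∈ I such that T_i E ⊆ W for all i ≥ i₀; (ii) there exist real numbers c_i ≥ 0 (i ∈ I) such that for each x ∈ E there exists i₀ ∈ I with T_i x ∈ W and ‖T_i x‖_W ≤ c_i ‖x‖_E for all i ≥ i₀. -/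
universe u

open Filter Topology

namespace ContinuousLinearMap

variable {E F G : Type*} [NormedAddCommGroup E] [NormedSpace ℝ E] [CompleteSpace E]
  [NormedAddCommGroup F] [NormedSpace ℝ F] [NormedAddCommGroup G] [NormedSpace ℝ G]

/-- A bounded operator on a Banach space is onto as soon as every vector can be approximated, up
to half its norm, by the image of a vector of controlled norm. -/
theorem surjective_of_approx_preimage (f : E →L[ℝ] F) {C : ℝ}
    (hf : ∀ y, ∃ x, ‖y - f x‖ ≤ 1 / 2 * ‖y‖ ∧ ‖x‖ ≤ C * ‖y‖) (hC : 0 ≤ C) :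
    Function.Surjective f := by
  intro y
  choose g hg hgC using hf
  let h : F → F := fun y => y - f (g y)
  have h_iter_le (n : ℕ) : ‖h^[n] y‖ ≤ (1 / 2) ^ n * ‖y‖ := by
    induction n with
    | zero => simp
    | succ n ih =>
      rw [Function.iterate_succ_apply', pow_succ', mul_assoc]
      exact (hg _).trans (by gcongr)
  have h_tendsto : Tendsto (fun n => h^[n] y) atTop (𝓝 0) := by
    refine squeeze_zero_norm h_iter_le ?_
    simpa using (tendsto_pow_atTop_nhds_zero_of_lt_one (r := (1 / 2 : ℝ))
      (by norm_num) (by norm_num)).mul_const ‖y‖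
  let u : ℕ → E := fun n => g (h^[n] y)
  have hu : Summable u := by
    refine .of_norm_bounded (g := fun n => (1 / 2 : ℝ) ^ n * (C * ‖y‖))
      (Summable.mul_right _ (summable_geometric_of_lt_one (by norm_num) (by norm_num)))
      fun n => (hgC _).trans ?_
    calc C * ‖h^[n] y‖ ≤ C * ((1 / 2) ^ n * ‖y‖) := by gcongr; exact h_iter_le n
      _ = (1 / 2) ^ n * (C * ‖y‖) := by ring
  have f_sum (n : ℕ) : f (∑ i ∈ Finset.range n, u i) = y - h^[n] y := by
    induction n with
    | zero => simp
    | succ n ih =>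
      rw [Finset.sum_range_succ, map_add, ih, Function.iterate_succ_apply']
      simp only [h, u]
      abel
  refine ⟨∑' n, u n, tendsto_nhds_unique
    ((f.continuous.tendsto _).comp hu.hasSum.tendsto_sum_nat) ?_⟩
  simpa [Function.comp_def, f_sum] using h_tendsto.const_sub y

/-- A bounded operator on a Banach space whose range is not meagre is onto. -/
theorem surjective_of_not_isMeagre_range (f : E →L[ℝ] F) (hf : ¬ IsMeagre (Set.range f)) :
    Function.Surjective f := by
  obtain ⟨n, hn⟩ : ∃ n : ℕ, ¬ IsMeagre (f '' Metric.ball 0 n) := by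
    by_contra! h
    refine hf ((isMeagre_iUnion h).mono ?_)
    rintro _ ⟨x, rfl⟩
    obtain ⟨n, hn⟩ := exists_nat_gt ‖x‖
    exact Set.mem_iUnion.2 ⟨n, x, by simpa using hn, rfl⟩
  set D := closure (f '' Metric.ball 0 n)
  have hne : (interior D).Nonempty := by
    by_contra h
    exact hn (IsNowhereDense.isMeagre (Set.not_nonempty_iff_eq_empty.1 h))
  have hconv : Convex ℝ D := ((convex_ball 0 _).linear_image f.toLinearMap).closure
  have hsymm : ∀ y ∈ D, -y ∈ D := fun y hy =>
    map_mem_closure continuous_neg hy (by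
      rintro _ ⟨x, hx, rfl⟩
      exact ⟨-x, by simpa using hx, map_neg f x⟩)
  have hzero : (0 : F) ∈ interior D := by
    obtain ⟨a, ha⟩ := hne
    have := hconv.combo_interior_closure_mem_interior ha
      (subset_closure (hsymm a (interior_subset ha)))
      (a := 1 / 2) (b := 1 / 2) (by norm_num) (by norm_num) (by norm_num)
    simpa using this
  obtain ⟨ε, hε, hball⟩ := Metric.mem_nhds_iff.1 (mem_interior_iff_mem_nhds.1 hzero)
  refine f.surjective_of_approx_preimage (C := n * (2 / ε)) (fun y => ?_) (by positivity)
  rcases eq_or_ne y 0 with rfl | hy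
  · exact ⟨0, by simp⟩
  have hy' : 0 < ‖y‖ := norm_pos_iff.2 hy
  set r := 2 / ε * ‖y‖ with hr
  have hr0 : 0 < r := by positivity
  have hmem : r⁻¹ • y ∈ D := hball (by
    rw [mem_ball_zero_iff, norm_smul, norm_inv, Real.norm_of_nonneg hr0.le, hr]
    field_simp
    norm_num)
  obtain ⟨_, ⟨x, hx, rfl⟩, hxy⟩ := Metric.mem_closure_iff.1 hmem (ε / 4) (by positivity)
  rw [mem_ball_zero_iff] at hx
  refine ⟨r • x, ?_, ?_⟩
  · calc ‖y - f (r • x)‖ = ‖r • (r⁻¹ • y - f x)‖ := by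
          rw [smul_sub, smul_inv_smul₀ hr0.ne', map_smul]
      _ = r * dist (r⁻¹ • y) (f x) := by
          rw [norm_smul, Real.norm_of_nonneg hr0.le, dist_eq_norm]
      _ ≤ r * (ε / 4) := by gcongr
      _ = 1 / 2 * ‖y‖ := by rw [hr]; field_simp; norm_num
  · calc ‖r • x‖ = r * ‖x‖ := by rw [norm_smul, Real.norm_of_nonneg hr0.le]
      _ ≤ r * n := by gcongr
      _ = n * (2 / ε) * ‖y‖ := by rw [hr]; ring

variable [CompleteSpace G]

/-- If the preimage of an operator range under a bounded operator is not meagre, then it is the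
whole space. -/
theorem mem_range_of_not_isMeagre_preimage (T : E →L[ℝ] F) (k : G →L[ℝ] F)
    (h : ¬ IsMeagre (T ⁻¹' Set.range k)) (x : E) : T x ∈ Set.range k := by
  let L : E × G →L[ℝ] F := T.comp (.fst ℝ E G) - k.comp (.snd ℝ E G)
  have : CompleteSpace L.ker := L.isClosed_ker.completeSpace_coe
  let p : L.ker →L[ℝ] E := (ContinuousLinearMap.fst ℝ E G).comp L.ker.subtypeL
  have hp : Function.Surjective p := by
    refine p.surjective_of_not_isMeagre_range fun hm => h (hm.mono ?_)
    rintro x ⟨w, hw⟩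
    exact ⟨⟨(x, w), by simp [L, hw]⟩, rfl⟩
  obtain ⟨⟨⟨x, w⟩, hxw⟩, rfl⟩ := hp x
  have hTk : T x - k w = 0 := hxw
  exact ⟨w, (sub_eq_zero.1 hTk).symm⟩

/-- A bounded operator with values in the range of an injective bounded operator `k` factors
through `k`. -/
theorem exists_comp_eq_of_forall_mem_range (T : E →L[ℝ] F) (k : G →L[ℝ] F)
    (hk : Function.Injective k) (h : ∀ x, T x ∈ Set.range k) :
    ∃ S : E →L[ℝ] G, k.comp S = T := by
  let g : E →ₗ[ℝ] G := (LinearEquiv.ofInjective k.toLinearMap hk).symm.toLinearMap ∘ₗ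
    T.toLinearMap.codRestrict (LinearMap.range k.toLinearMap) h
  have hg (x : E) : k (g x) = T x :=
    congrArg Subtype.val ((LinearEquiv.ofInjective k.toLinearMap hk).apply_symm_apply
      (T.toLinearMap.codRestrict (LinearMap.range k.toLinearMap) h x))
  refine ⟨ofSeqClosedGraph (g := g) fun u x y hu hy => hk ?_, ContinuousLinearMap.ext hg⟩
  rw [hg]
  refine tendsto_nhds_unique ((k.continuous.tendsto y).comp hy) ?_
  simpa [Function.comp_def, hg] using (T.continuous.tendsto x).comp hu

end ContinuousLinearMap

/-- Let `E, F` be Banach spaces, `(ι, ≤)` a directed set containing a countable majorizing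
subset, and `(T i)` a family of bounded operators from `E` to `F`.  Let `W ⊆ F` be an
operator range with complete norm `nW`.  Then the following are equivalent:
(i) there is `i₀` such that `T i E ⊆ W` for all `i ≥ i₀`;
(ii) there are numbers `c i ≥ 0` such that for each `x ∈ E` there is `i₀` with
`T i x ∈ W` and `nW (T i x) ≤ c i * ‖x‖` for all `i ≥ i₀`. -/
theorem eventually_mapsInto_operator_range_iff
    {E : Type u} {F : Type u}
    [NormedAddCommGroup E] [NormedSpace ℝ E] [CompleteSpace E]
    [NormedAddCommGroup F] [NormedSpace ℝ F] [CompleteSpace F]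
    {ι : Type*} [Nonempty ι] [Preorder ι] [IsDirected ι (· ≤ ·)]
    (hmaj : ∃ J : Set ι, J.Countable ∧ ∀ i : ι, ∃ j ∈ J, i ≤ j)
    (T : ι → E →L[ℝ] F)
    (Wset : Set F) (nW : F → ℝ)
    (wW : OperatorRangeWitness F Wset nW) :
    (∃ i₀ : ι, ∀ i, i₀ ≤ i → ∀ x : E, T i x ∈ Wset) ↔
    (∃ c : ι → ℝ, (∀ i, 0 ≤ c i) ∧
      ∀ x : E, ∃ i₀ : ι, ∀ i, i₀ ≤ i → T i x ∈ Wset ∧ nW (T i x) ≤ c i * ‖x‖) := by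
  obtain ⟨G, k, hk, rfl, hnorm⟩ := wW
  constructor
  · rintro ⟨i₀, hi₀⟩
    have hS (i : ι) (hi : i₀ ≤ i) : ∃ S : E →L[ℝ] G, k.comp S = T i :=
      (T i).exists_comp_eq_of_forall_mem_range k hk (hi₀ i hi)
    have hc (i : ι) : ∃ c : ℝ, 0 ≤ c ∧ (i₀ ≤ i → ∀ x, nW (T i x) ≤ c * ‖x‖) := by
      by_cases hi : i₀ ≤ i
      · obtain ⟨S, hST⟩ := hS i hi
        refine ⟨‖S‖, norm_nonneg S, fun _ x => ?_⟩
        rw [← hST, ContinuousLinearMap.comp_apply, ← hnorm]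
        exact S.le_opNorm x
      · exact ⟨0, le_rfl, fun h => absurd h hi⟩
    choose c hc0 hc using hc
    exact ⟨c, hc0, fun x => ⟨i₀, fun i hi => ⟨hi₀ i hi x, hc i hi x⟩⟩⟩
  · rintro ⟨c, -, hc⟩
    obtain ⟨J, hJ, hmaj⟩ := hmaj
    obtain ⟨j, -, hj⟩ : ∃ j ∈ J, ¬ IsMeagre {x : E | ∀ i, j ≤ i → T i x ∈ Set.range k} := by
      by_contra! h
      refine not_isMeagre_of_isOpen isOpen_univ Set.univ_nonempty
        ((isMeagre_biUnion hJ h).mono fun x _ => ?_)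
      obtain ⟨i₀, hi₀⟩ := hc x
      obtain ⟨j, hjJ, hij⟩ := hmaj i₀
      exact Set.mem_biUnion hjJ fun i hi => (hi₀ i (hij.trans hi)).1
    exact ⟨j, fun i hi => (T i).mem_range_of_not_isMeagre_preimage k
      fun hm => hj (hm.mono fun x hx => hx i hi)⟩
end

section
/- Let E be a Banach space, let (I, ≤) be a directed set that contains a countable majorizing subset, and let (T_i)_{i ∈ I} be a family of bounded linear operators on E. Let V ⊆ E be an operator range, endowed with a complete norm ‖·‖_V making the inclusion V → E continuous. Then the following are equivalent: (i) V is uniformly eventually invariant under (T_i), i.e., there exists i₀ ∈ I such that T_i V ⊆ V for all i ≥ i₀; (ii) there exist real numbers c_i ≥ 0 (i ∈ I) such that for each v ∈ V there exists i₀ ∈ I with T_i v ∈ V and ‖T_i v‖_V ≤ c_i ‖v‖_V for all i ≥ i₀. -/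
universe u

open Filter Topology Metric

namespace ContinuousLinearMap

variable {W F : Type*} [NormedAddCommGroup W] [NormedSpace ℝ W]
  [NormedAddCommGroup F] [NormedSpace ℝ F]

/-- If the range of a bounded operator is not meagre, every point is approximated up to half of
its norm by the image of a point of comparable norm. -/
theorem exists_approx_preimage_of_not_isMeagre_range (L : W →L[ℝ] F)
    (hL : ¬ IsMeagre (Set.range L)) :
    ∃ C : ℝ, 0 ≤ C ∧ ∀ y, ∃ x, ‖y - L x‖ ≤ 1 / 2 * ‖y‖ ∧ ‖x‖ ≤ C * ‖y‖ := by
  obtain ⟨n, hn⟩ : ∃ n : ℕ, ¬ IsMeagre (L '' ball 0 n) := by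
    by_contra! h
    refine hL ((isMeagre_iUnion h).mono ?_)
    rintro _ ⟨x, rfl⟩
    obtain ⟨n, hn⟩ := exists_nat_gt ‖x‖
    exact Set.mem_iUnion.2 ⟨n, x, by simpa using hn, rfl⟩
  obtain ⟨a, ha⟩ : (interior (closure (L '' ball 0 n))).Nonempty := by
    by_contra h
    exact hn (IsNowhereDense.isMeagre (Set.not_nonempty_iff_eq_empty.1 h))
  rw [mem_interior_iff_mem_nhds, Metric.mem_nhds_iff] at ha
  obtain ⟨ε, hε, H⟩ := ha
  refine ⟨4 * n / ε, by positivity, fun y => ?_⟩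
  rcases eq_or_ne y 0 with rfl | hy
  · exact ⟨0, by simp⟩
  have hy' : 0 < ‖y‖ := norm_pos_iff.2 hy
  set d : ℝ := ε / (2 * ‖y‖) with hd
  have hd0 : 0 < d := by positivity
  have hdy : ‖d • y‖ = ε / 2 := by
    rw [norm_smul, Real.norm_of_nonneg hd0.le, hd]
    field_simp
  have approx : ∀ z ∈ ball a ε, ∃ x, ‖x‖ < n ∧ ‖z - L x‖ < ε / 8 := by
    intro z hz
    obtain ⟨_, ⟨x, hx, rfl⟩, h⟩ := Metric.mem_closure_iff.1 (H hz) (ε / 8) (by positivity)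
    exact ⟨x, by simpa using hx, by rwa [← dist_eq_norm]⟩
  obtain ⟨x₁, hx₁, h₁⟩ := approx (a + d • y) (by
    rw [mem_ball, dist_eq_norm, add_sub_cancel_left, hdy]
    linarith)
  obtain ⟨x₂, hx₂, h₂⟩ := approx a (mem_ball_self hε)
  refine ⟨d⁻¹ • (x₁ - x₂), ?_, ?_⟩
  · have key : y - L (d⁻¹ • (x₁ - x₂)) = d⁻¹ • ((a + d • y - L x₁) - (a - L x₂)) := by
      rw [map_smul, map_sub, show (a + d • y - L x₁) - (a - L x₂) = d • y - (L x₁ - L x₂) by abel,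
        smul_sub d⁻¹ (d • y), inv_smul_smul₀ hd0.ne']
    rw [key, norm_smul, Real.norm_of_nonneg (inv_nonneg.2 hd0.le)]
    calc d⁻¹ * ‖(a + d • y - L x₁) - (a - L x₂)‖ ≤ d⁻¹ * (ε / 8 + ε / 8) := by
          gcongr
          exact (norm_sub_le _ _).trans (by gcongr)
      _ = 1 / 2 * ‖y‖ := by rw [hd]; field_simp; norm_num
  · rw [norm_smul, Real.norm_of_nonneg (inv_nonneg.2 hd0.le)]
    calc d⁻¹ * ‖x₁ - x₂‖ ≤ d⁻¹ * (n + n) := by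
          gcongr
          exact (norm_sub_le _ _).trans (by gcongr)
      _ = 4 * n / ε * ‖y‖ := by rw [hd]; field_simp; ring

/-- A bounded operator from a Banach space whose range is not meagre is surjective. -/
theorem surjective_of_not_isMeagre_range_s4 [CompleteSpace W] (L : W →L[ℝ] F)
    (hL : ¬ IsMeagre (Set.range L)) : Function.Surjective L := by
  obtain ⟨C, hC, hg⟩ := L.exists_approx_preimage_of_not_isMeagre_range hL
  choose g hg hgC using hg
  intro y
  let h : F → F := fun z => z - L (g z)
  have hnle : ∀ n : ℕ, ‖h^[n] y‖ ≤ (1 / 2) ^ n * ‖y‖ := by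
    intro n
    induction n with
    | zero => simp
    | succ n IH =>
      rw [Function.iterate_succ_apply', pow_succ', mul_assoc]
      exact (hg _).trans (by gcongr)
  have hu : Summable fun n => g (h^[n] y) := by
    refine Summable.of_norm_bounded (g := fun n : ℕ => (1 / 2 : ℝ) ^ n * (C * ‖y‖))
      (summable_geometric_two.mul_right _) fun n => ?_
    calc ‖g (h^[n] y)‖ ≤ C * ((1 / 2) ^ n * ‖y‖) := (hgC _).trans (by gcongr; exact hnle n)
      _ = (1 / 2) ^ n * (C * ‖y‖) := by ring
  have hsum : ∀ n : ℕ, L (∑ i ∈ Finset.range n, g (h^[i] y)) = y - h^[n] y := by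
    intro n
    induction n with
    | zero => simp
    | succ n IH =>
      rw [Finset.sum_range_succ, map_add, IH, Function.iterate_succ_apply', sub_add]
  have hlim := (L.continuous.tendsto _).comp hu.hasSum.tendsto_sum_nat
  simp only [Function.comp_def, hsum] at hlim
  have hzero : Tendsto (fun n => h^[n] y) atTop (𝓝 0) := by
    refine squeeze_zero_norm hnle ?_
    simpa using (tendsto_pow_atTop_nhds_zero_of_lt_one (r := (1 / 2 : ℝ)) (by norm_num)
      (by norm_num)).mul_const ‖y‖
  exact ⟨_, tendsto_nhds_unique hlim (by simpa using hzero.const_sub y)⟩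

variable {E : Type*} [NormedAddCommGroup E] [NormedSpace ℝ E] [CompleteSpace F]

/-- The preimage of an operator range under a bounded operator is the whole space as soon as it
is not meagre. -/
theorem mem_range_of_not_isMeagre_preimage_range [CompleteSpace W] (k : W →L[ℝ] E)
    (S : F →L[ℝ] E) (h : ¬ IsMeagre (S ⁻¹' Set.range k)) (f : F) : S f ∈ Set.range k := by
  let G : Submodule ℝ (F × W) :=
    (S.comp (fst ℝ F W) - k.comp (snd ℝ F W)).ker
  have hG : ∀ p : F × W, p ∈ G ↔ k p.2 = S p.1 := fun p => by
    rw [eq_comm, ← sub_eq_zero]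
    simp [G]
  have hclosed : IsClosed (G : Set (F × W)) :=
    (S.comp (fst ℝ F W) - k.comp (snd ℝ F W)).isClosed_ker
  have : CompleteSpace G := hclosed.completeSpace_coe
  have hsurj := ((fst ℝ F W).comp G.subtypeL).surjective_of_not_isMeagre_range_s4 fun hm => by
    refine h (hm.mono ?_)
    rintro x ⟨w, hw⟩
    exact ⟨⟨(x, w), (hG _).2 hw⟩, rfl⟩
  obtain ⟨⟨p, hp⟩, rfl⟩ := hsurj f
  exact ⟨p.2, (hG p).1 hp⟩

/-- If a bounded operator maps into the range of an injective bounded operator `k`, it factors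
boundedly through `k`. -/
theorem exists_comp_eq_of_range_subset [CompleteSpace W] (k : W →L[ℝ] E)
    (hk : Function.Injective k) (S : F →L[ℝ] E) (h : ∀ f, S f ∈ Set.range k) :
    ∃ R : F →L[ℝ] W, k.comp R = S := by
  choose r hr using h
  let R : F →ₗ[ℝ] W :=
    { toFun := r
      map_add' := fun x y => hk (by simp [hr])
      map_smul' := fun c x => hk (by simp [hr]) }
  refine ⟨ofSeqClosedGraph (g := R) fun u x y hu hRu => hk ?_, by ext x; exact hr x⟩
  have h₁ := (k.continuous.tendsto _).comp hRu
  have h₂ := (S.continuous.tendsto _).comp hu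
  have hcomp : k ∘ R ∘ u = S ∘ u := funext fun n => hr (u n)
  rw [hcomp] at h₁
  exact (tendsto_nhds_unique h₁ h₂).trans (hr x).symm

end ContinuousLinearMap

/-- Let `E` be a Banach space, `(ι, ≤)` a directed set containing a countable majorizing
subset, and `(T i)` a family of bounded operators on `E`.  Let `V ⊆ E` be an operator
range with complete norm `nV`.  Then the following are equivalent:
(i) `V` is uniformly eventually invariant under `(T i)`;
(ii) there are numbers `c i ≥ 0` such that for each `v ∈ V` there is `i₀` with
`T i v ∈ V` and `nV (T i v) ≤ c i * nV v` for all `i ≥ i₀`. -/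
theorem operator_range_uniformly_eventually_invariant_iff
    {E : Type u} [NormedAddCommGroup E] [NormedSpace ℝ E] [CompleteSpace E]
    {ι : Type*} [Nonempty ι] [Preorder ι] [IsDirected ι (· ≤ ·)]
    (hmaj : ∃ J : Set ι, J.Countable ∧ ∀ i : ι, ∃ j ∈ J, i ≤ j)
    (T : ι → E →L[ℝ] E)
    (Vset : Set E) (nV : E → ℝ)
    (wV : OperatorRangeWitness E Vset nV) :
    (∃ i₀ : ι, ∀ i, i₀ ≤ i → ∀ v ∈ Vset, T i v ∈ Vset) ↔
    (∃ c : ι → ℝ, (∀ i, 0 ≤ c i) ∧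
      ∀ v ∈ Vset, ∃ i₀ : ι, ∀ i, i₀ ≤ i → T i v ∈ Vset ∧ nV (T i v) ≤ c i * nV v) := by
  obtain ⟨F, k, hinj, rfl, hnorm⟩ := wV
  constructor
  · rintro ⟨i₀, hi₀⟩
    have hR : ∀ i, ∃ R : F →L[ℝ] F, i₀ ≤ i → k.comp R = (T i).comp k := fun i => by
      by_cases hi : i₀ ≤ i
      · obtain ⟨R, hR⟩ := k.exists_comp_eq_of_range_subset hinj ((T i).comp k)
          fun f => hi₀ i hi _ ⟨f, rfl⟩
        exact ⟨R, fun _ => hR⟩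
      · exact ⟨0, fun h => absurd h hi⟩
    choose R hR using hR
    refine ⟨fun i => ‖R i‖, fun i => norm_nonneg _, ?_⟩
    rintro _ ⟨f, rfl⟩
    refine ⟨i₀, fun i hi => ⟨hi₀ i hi _ ⟨f, rfl⟩, ?_⟩⟩
    have hf : k (R i f) = T i (k f) := DFunLike.congr_fun (hR i hi) f
    rw [← hf, ← hnorm, ← hnorm]
    exact (R i).le_opNorm f
  · rintro ⟨c, -, hc⟩
    obtain ⟨J, hJ, hmaj⟩ := hmaj
    have : Countable J := hJ.to_subtype
    let D : J → Set F := fun j => {f | ∀ i, (j : ι) ≤ i → T i (k f) ∈ Set.range k}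
    obtain ⟨j, hj⟩ : ∃ j, ¬ IsMeagre (D j) := by
      by_contra! h
      refine not_isMeagre_of_isOpen (isOpen_univ (X := F)) Set.univ_nonempty
        ((isMeagre_iUnion h).mono fun f _ => ?_)
      obtain ⟨i₀, hi₀⟩ := hc (k f) ⟨f, rfl⟩
      obtain ⟨j, hjJ, hj⟩ := hmaj i₀
      exact Set.mem_iUnion.2 ⟨⟨j, hjJ⟩, fun i hi => (hi₀ i (hj.trans hi)).1⟩
    refine ⟨j, fun i hi => ?_⟩
    rintro _ ⟨f, rfl⟩
    exact k.mem_range_of_not_isMeagre_preimage_range ((T i).comp k)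
      (fun hm => hj (hm.mono fun f hf => hf i hi)) f
end

section
/- Let K be a non-empty compact Hausdorff space and let (T_t)_{t ≥ 0} be an individually eventually positive C₀-semigroup on the Banach lattice C(K, ℝ) of real-valued continuous functions on K with the supremum norm and pointwise order. If the semigroup is not nilpotent (i.e., there is no t ≥ 0 with T_t = 0), then there exists s > 0 such that lim_{n → ∞} ‖(T_s)^n‖^{1/n} > 0, i.e., the operator T_s has non-zero spectral radius; equivalently, the growth bound of the semigroup is not −∞ and the spectrum of the generator is non-empty. -/
open Filter

/-- An individually eventually positive family of operators on `C(K, ℝ)` is eventually positive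
on some ball, uniformly in the element of the ball. -/
theorem exists_ball_forall_nonneg_of_individually_eventually_positive
    {K : Type*} [TopologicalSpace K] [CompactSpace K]
    (T : ℝ → C(K, ℝ) →L[ℝ] C(K, ℝ))
    (hep : ∀ f : C(K, ℝ), 0 ≤ f → ∃ t₀ : ℝ, 0 ≤ t₀ ∧ ∀ t : ℝ, t₀ ≤ t → 0 ≤ T t f) :
    ∃ (m : ℕ) (f₀ : C(K, ℝ)) (ε : ℝ), 0 < ε ∧
      ∀ f ∈ Metric.ball f₀ ε, ∀ t : ℝ, (m : ℝ) ≤ t → 0 ≤ T t f := by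
  let B : ℕ → Set C(K, ℝ) := fun m => {f | ∀ t : ℝ, (m : ℝ) ≤ t → 0 ≤ T t f}
  have hB : ∀ m, IsClosed (B m) := fun m => by
    simp only [B, ContinuousMap.le_def, Set.ofPred_forall]
    exact isClosed_iInter fun t => isClosed_iInter fun _ => isClosed_iInter fun x =>
      isClosed_le continuous_const ((continuous_eval_const x).comp (T t).continuous)
  have hcover : ⋃ m, (B m ∪ (Metric.ball (1 : C(K, ℝ)) 1)ᶜ) = Set.univ := by
    refine Set.eq_univ_of_forall fun f => Set.mem_iUnion.2 ?_
    by_cases hf : f ∈ Metric.ball (1 : C(K, ℝ)) 1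
    · have hf0 : 0 ≤ f := fun x => by
        have h := (ContinuousMap.dist_apply_le_dist (f := f) (g := 1) x).trans_lt hf
        rw [Real.dist_eq, abs_lt] at h
        simp only [ContinuousMap.one_apply] at h
        change 0 ≤ f x
        linarith [h.1]
      obtain ⟨t₀, -, ht₀⟩ := hep f hf0
      obtain ⟨m, hm⟩ := exists_nat_ge t₀
      exact ⟨m, Or.inl fun t ht => ht₀ t (hm.trans ht)⟩
    · exact ⟨0, Or.inr hf⟩
  have hdense := dense_iUnion_interior_of_closed
    (fun m => (hB m).union Metric.isOpen_ball.isClosed_compl) hcover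
  obtain ⟨f₀, hf₀, hint⟩ := hdense.inter_open_nonempty (Metric.ball (1 : C(K, ℝ)) 1)
    Metric.isOpen_ball ⟨1, Metric.mem_ball_self one_pos⟩
  obtain ⟨m, hm⟩ := Set.mem_iUnion.1 hint
  obtain ⟨ε, hε, hsub⟩ := Metric.isOpen_iff.1 (isOpen_interior.inter Metric.isOpen_ball) f₀
    ⟨hm, hf₀⟩
  refine ⟨m, f₀, ε, hε, fun f hf => ?_⟩
  obtain ⟨h₁, h₂⟩ := hsub hf
  exact (interior_subset h₁).resolve_right fun h => h h₂

/-- A linear map to `C(K, ℝ)` that is nonnegative on a ball and vanishes at its center is zero. -/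
theorem ContinuousLinearMap.eq_zero_of_nonneg_on_ball
    {K E : Type*} [TopologicalSpace K] [CompactSpace K] [NormedAddCommGroup E] [NormedSpace ℝ E]
    (S : E →L[ℝ] C(K, ℝ)) {f₀ : E} {ε : ℝ} (hε : 0 < ε)
    (hS : ∀ f ∈ Metric.ball f₀ ε, 0 ≤ S f) (h₀ : S f₀ = 0) : S = 0 := by
  ext1 g
  obtain ⟨c, hc, hcg⟩ : ∃ c : ℝ, 0 < c ∧ c * ‖g‖ < ε := by
    refine ⟨ε / (‖g‖ + 1), by positivity, ?_⟩
    rw [div_mul_eq_mul_div, div_lt_iff₀ (by positivity)]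
    nlinarith [norm_nonneg g]
  have hnorm : ‖c • g‖ < ε := by rwa [norm_smul, Real.norm_of_nonneg hc.le]
  have hadd := hS (f₀ + c • g) (by simpa [dist_eq_norm] using hnorm)
  have hsub := hS (f₀ - c • g) (by simpa [dist_eq_norm] using hnorm)
  rw [map_add, h₀, zero_add, map_smul] at hadd
  rw [map_sub, h₀, zero_sub, map_smul] at hsub
  have : c • S g = 0 := le_antisymm (by simpa using hsub) hadd
  exact (smul_eq_zero.1 this).resolve_left (ne_of_gt hc)

/-- Let `K` be a non-empty compact Hausdorff space and `(T t)_{t ≥ 0}` an individually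
eventually positive `C₀`-semigroup on `C(K, ℝ)`.  If the semigroup is not nilpotent,
then there exists `s > 0` such that the operator `T s` has non-zero spectral radius,
i.e. the Gelfand limit `lim ‖(T s)^n‖^{1/n}` (which exists and equals the spectral
radius) is strictly positive. -/
theorem nonnilpotent_eventually_positive_semigroup_on_CK_has_positive_spectral_radius
    {K : Type*} [TopologicalSpace K] [CompactSpace K] [T2Space K] [Nonempty K]
    (T : ℝ → C(K, ℝ) →L[ℝ] C(K, ℝ))
    (hT0 : T 0 = 1)
    (hTadd : ∀ s t : ℝ, 0 ≤ s → 0 ≤ t → T (s + t) = (T s).comp (T t))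
    (hTcont : ∀ f : C(K, ℝ), ContinuousOn (fun t : ℝ => T t f) (Set.Ici 0))
    (hep : ∀ f : C(K, ℝ), 0 ≤ f → ∃ t₀ : ℝ, 0 ≤ t₀ ∧ ∀ t : ℝ, t₀ ≤ t → 0 ≤ T t f)
    (hnil : ¬ ∃ t : ℝ, 0 ≤ t ∧ T t = 0) :
    ∃ s : ℝ, 0 < s ∧ ∀ r : ℝ,
      Tendsto (fun n : ℕ => ‖(T s) ^ n‖ ^ (1 / (n : ℝ))) atTop (nhds r) → 0 < r := by
  obtain ⟨m, f₀, ε, hε, hpos⟩ :=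
    exists_ball_forall_nonneg_of_individually_eventually_positive T hep
  have hm0 : (0 : ℝ) ≤ m := m.cast_nonneg
  have hne : T m f₀ ≠ 0 := fun h =>
    hnil ⟨m, hm0, (T m).eq_zero_of_nonneg_on_ball hε (fun f hf => hpos f hf m le_rfl) h⟩
  obtain ⟨δ, hδ, hδε⟩ : ∃ δ : ℝ, 0 < δ ∧ dist (T δ f₀) f₀ < ε / 2 := by
    obtain ⟨η, hη, H⟩ := Metric.continuousWithinAt_iff.1 (hTcont f₀ 0 Set.self_mem_Ici)
      (ε / 2) (half_pos hε)
    refine ⟨η / 2, half_pos hη, ?_⟩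
    have := H (x := η / 2) (half_pos hη).le
      (by rw [Real.dist_eq, sub_zero, abs_of_pos (half_pos hη)]; linarith)
    simpa [hT0] using this
  have hmem : (2 : ℝ) • T δ f₀ - f₀ ∈ Metric.ball f₀ ε := by
    have : (2 : ℝ) • T δ f₀ - f₀ - f₀ = (2 : ℝ) • (T δ f₀ - f₀) := by module
    rw [mem_ball_iff_norm, this, norm_smul, Real.norm_of_nonneg zero_le_two]
    rw [dist_eq_norm] at hδε
    linarith
  have hstep : ∀ t : ℝ, (m : ℝ) ≤ t → T t f₀ ≤ (2 : ℝ) • T (t + δ) f₀ := fun t ht => by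
    have h := hpos _ hmem t ht
    rw [map_sub, map_smul, sub_nonneg] at h
    rwa [hTadd t δ (hm0.trans ht) hδ.le]
  have hiter : ∀ k : ℕ, T m f₀ ≤ (2 : ℝ) ^ k • T (m + k * δ) f₀ := fun k => by
    induction k with
    | zero => simp
    | succ k ih =>
      have h := hstep (m + k * δ) (le_add_of_nonneg_right (by positivity))
      refine ih.trans ((smul_le_smul_of_nonneg_left h (by positivity)).trans_eq ?_)
      rw [smul_smul, ← pow_succ, Nat.cast_succ, add_mul, one_mul, add_assoc]
  have hpow : ∀ k : ℕ, T (m + k * δ) f₀ = (T δ ^ k) (T m f₀) := fun k => by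
    induction k with
    | zero => simp
    | succ k ih =>
      have : (m : ℝ) + (k + 1 : ℕ) * δ = δ + (m + k * δ) := by push_cast; ring
      rw [this, hTadd δ _ hδ.le (by positivity), ContinuousLinearMap.comp_apply, ih, pow_succ']
      rfl
  have hlower : ∀ k : ℕ, (1 / 2 : ℝ) ^ k ≤ ‖T δ ^ k‖ := fun k => by
    have hle : ‖T m f₀‖ ≤ ‖(2 : ℝ) ^ k • T (m + k * δ) f₀‖ := by
      refine (ContinuousMap.norm_le _ (norm_nonneg _)).2 fun x => ?_
      have h0 : 0 ≤ (T m f₀) x := hpos f₀ (Metric.mem_ball_self hε) m le_rfl x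
      rw [Real.norm_of_nonneg h0]
      exact (hiter k x).trans (ContinuousMap.apply_le_norm _ x)
    rw [norm_smul, hpow, norm_pow, Real.norm_of_nonneg zero_le_two] at hle
    have hle' : 1 * ‖T m f₀‖ ≤ (2 ^ k * ‖T δ ^ k‖) * ‖T m f₀‖ := by
      rw [one_mul, mul_assoc]
      exact hle.trans (mul_le_mul_of_nonneg_left ((T δ ^ k).le_opNorm _) (by positivity))
    have := le_of_mul_le_mul_right hle' (norm_pos_iff.2 hne)
    rw [one_div, inv_pow, inv_le_iff_one_le_mul₀' (by positivity)]
    exact this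
  refine ⟨δ, hδ, fun r hr => (one_half_pos (α := ℝ)).trans_le (ge_of_tendsto hr ?_)⟩
  filter_upwards [eventually_ne_atTop 0] with k hk
  calc (1 / 2 : ℝ) = ((1 / 2 : ℝ) ^ k) ^ (1 / (k : ℝ)) := by
        rw [one_div (k : ℝ), Real.pow_rpow_inv_natCast (by norm_num) hk]
    _ ≤ ‖T δ ^ k‖ ^ (1 / (k : ℝ)) :=
        Real.rpow_le_rpow (by positivity) (hlower k) (by positivity)
end

section
/- Let L be a non-empty locally compact Hausdorff space and let (T_t)_{t ≥ 0} be a C₀-semigroup on the Banach lattice C₀(L, ℝ) of real-valued continuous functions on L vanishing at infinity, with the supremum norm and pointwise order, which is individually eventually positive and persistently irreducible. Then there exists s > 0 such that lim_{n → ∞} ‖(T_s)^n‖^{1/n} > 0, i.e., the operator T_s has non-zero spectral radius; equivalently, the growth bound of the semigroup is not −∞ and the spectrum of the generator is non-empty. -/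
open Filter
open scoped ZeroAtInfty

namespace ZeroAtInftyContinuousMap

variable {L : Type*} [TopologicalSpace L]

lemma abs_apply_le_norm (f : C₀(L, ℝ)) (x : L) : |f x| ≤ ‖f‖ := by
  have := f.toBCF.norm_coe_le_norm x
  rwa [norm_toBCF_eq_norm] at this

lemma norm_le_of_forall_abs_le (f : C₀(L, ℝ)) {C : ℝ} (hC : 0 ≤ C) (h : ∀ x, |f x| ≤ C) :
    ‖f‖ ≤ C := by
  rw [← norm_toBCF_eq_norm]
  exact (BoundedContinuousFunction.norm_le hC).2 h

/-- Evaluation at a point as a continuous linear functional. -/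
noncomputable def evalCLM (x : L) : C₀(L, ℝ) →L[ℝ] ℝ :=
  LinearMap.mkContinuous
    { toFun := fun f => f x
      map_add' := fun _ _ => rfl
      map_smul' := fun _ _ => rfl } 1
    (fun f => by simpa using abs_apply_le_norm f x)

@[simp]
lemma evalCLM_apply (x : L) (f : C₀(L, ℝ)) : evalCLM x f = f x := rfl

lemma continuous_eval (x : L) : Continuous fun f : C₀(L, ℝ) => f x :=
  (evalCLM x).continuous

lemma isCompact_setOf_le_abs (g : C₀(L, ℝ)) {ε : ℝ} (hε : 0 < ε) :
    IsCompact {x | ε ≤ |g x|} := by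
  have h : ∀ᶠ x in cocompact L, |g x| < ε := by
    have := (zero_at_infty g).abs
    rw [abs_zero] at this
    exact this.eventually (gt_mem_nhds hε)
  obtain ⟨K, hK, hsub⟩ := mem_cocompact.1 h
  refine hK.of_isClosed_subset (isClosed_le continuous_const (map_continuous g).abs) ?_
  intro x hx
  by_contra hxK
  exact (show ε ≤ |g x| from hx).not_gt (hsub hxK)

/-- The quotient `g / (u + δ)` of functions vanishing at infinity, for `u ≥ 0` and `δ > 0`. -/
noncomputable def divAddConst (g u : C₀(L, ℝ)) (hu : ∀ x, 0 ≤ u x) (δ : ℝ) (hδ : 0 < δ) :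
    C₀(L, ℝ) where
  toFun x := g x / (u x + δ)
  continuous_toFun := (map_continuous g).div ((map_continuous u).add continuous_const)
    fun x => by have := hu x; positivity
  zero_at_infty' := by
    have h : Tendsto (fun x => |g x| / δ) (cocompact L) (nhds 0) := by
      simpa using (zero_at_infty g).abs.div_const δ
    refine squeeze_zero_norm (fun x => ?_) h
    have := hu x
    rw [Real.norm_eq_abs, abs_div, abs_of_pos (show 0 < u x + δ by positivity)]
    gcongr
    linarith

/-- A function vanishing on the zero set of `u ≥ 0` is a uniform limit of multiples of `u`. -/
lemma mem_closure_range_mul (g u : C₀(L, ℝ)) (hu : ∀ x, 0 ≤ u x) (hg : ∀ x, u x = 0 → g x = 0) :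
    g ∈ closure (Set.range fun h : C₀(L, ℝ) => h * u) := by
  rw [Metric.mem_closure_range_iff]
  intro ε hε
  obtain ⟨m, hm, hmu⟩ : ∃ m : ℝ, 0 < m ∧ ∀ x, ε / 2 ≤ |g x| → m ≤ u x := by
    rcases Set.eq_empty_or_nonempty {x | ε / 2 ≤ |g x|} with he | hne
    · exact ⟨1, one_pos, fun x hx => absurd hx (Set.eq_empty_iff_forall_notMem.1 he x)⟩
    · obtain ⟨y, hy, hmin⟩ := (g.isCompact_setOf_le_abs (half_pos hε)).exists_isMinOn hne
        (map_continuous u).continuousOn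
      refine ⟨u y, (hu y).lt_of_ne fun h0 => ?_, fun x hx => hmin hx⟩
      have : ε / 2 ≤ |g y| := hy
      rw [hg y h0.symm, abs_zero] at this
      linarith
  have hδ : 0 < m * (ε / 2) / (‖g‖ + 1) := by positivity
  set δ := m * (ε / 2) / (‖g‖ + 1) with hδdef
  refine ⟨divAddConst g u hu δ hδ, ?_⟩
  rw [dist_eq_norm]
  refine lt_of_le_of_lt (norm_le_of_forall_abs_le _ (half_pos hε).le fun x => ?_) (half_lt_self hε)
  have hux := hu x
  have hpos : 0 < u x + δ := by positivity
  have heq : (g - divAddConst g u hu δ hδ * u) x = g x * (δ / (u x + δ)) := by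
    change g x - g x / (u x + δ) * u x = _
    field_simp
    ring
  rw [heq, abs_mul, abs_of_pos (div_pos hδ hpos)]
  rcases lt_or_ge |g x| (ε / 2) with hlt | hge
  · have h1 : δ / (u x + δ) ≤ 1 := (div_le_one hpos).2 (by linarith)
    calc |g x| * (δ / (u x + δ)) ≤ |g x| * 1 := by gcongr
      _ ≤ ε / 2 := by linarith
  · have hmx := hmu x hge
    have h1 : δ / (u x + δ) ≤ δ / m := by gcongr; linarith
    calc |g x| * (δ / (u x + δ)) ≤ (‖g‖ + 1) * (δ / m) := by
          gcongr
          linarith [g.abs_apply_le_norm x]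
      _ = ε / 2 := by rw [hδdef]; field_simp

/-- The closed ideal of functions vanishing on a set. -/
def vanishingIdeal (Z : Set L) : Submodule ℝ C₀(L, ℝ) where
  carrier := {f | ∀ z ∈ Z, f z = 0}
  zero_mem' := fun _ _ => rfl
  add_mem' := fun hf hg z hz => by simp [hf z hz, hg z hz]
  smul_mem' := fun c f hf z hz => by simp [hf z hz]

lemma mem_vanishingIdeal {Z : Set L} {f : C₀(L, ℝ)} :
    f ∈ vanishingIdeal Z ↔ ∀ z ∈ Z, f z = 0 := Iff.rfl

lemma isClosed_vanishingIdeal (Z : Set L) : IsClosed (vanishingIdeal Z : Set C₀(L, ℝ)) := by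
  have : (vanishingIdeal Z : Set C₀(L, ℝ)) = ⋂ z ∈ Z, {f | f z = 0} := by
    ext f; simp [mem_vanishingIdeal]
  rw [this]
  exact isClosed_biInter fun z _ => isClosed_eq (continuous_eval z) continuous_const

lemma mem_vanishingIdeal_of_abs_le {Z : Set L} {f g : C₀(L, ℝ)} (h : ∀ x, |f x| ≤ |g x|)
    (hg : g ∈ vanishingIdeal Z) : f ∈ vanishingIdeal Z := fun z hz => by
  have := h z
  rw [hg z hz, abs_zero] at this
  exact abs_nonpos_iff.1 this

lemma vanishingIdeal_univ : vanishingIdeal (Set.univ : Set L) = ⊥ := by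
  ext f
  simp only [mem_vanishingIdeal, Set.mem_univ, true_imp_iff, Submodule.mem_bot]
  exact ⟨fun h => ext h, fun h x => by simp [h]⟩

/-- In a locally compact Hausdorff space, each point carries a nonnegative compactly supported
bump function. -/
lemma exists_compactSupport_apply_eq_one [LocallyCompactSpace L] [T2Space L] (x : L) :
    ∃ f : C₀(L, ℝ), (∀ y, 0 ≤ f y) ∧ f x = 1 ∧ HasCompactSupport f := by
  obtain ⟨f, hf1, -, hfc, hf⟩ := exists_continuous_one_zero_of_isCompact
    (isCompact_singleton (x := x)) (isClosed_empty (X := L)) (Set.disjoint_empty _)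
  exact ⟨⟨f, hfc.is_zero_at_infty⟩, fun y => (hf y).1, hf1 rfl, hfc⟩

lemma vanishingIdeal_eq_top [LocallyCompactSpace L] [T2Space L] {Z : Set L}
    (h : vanishingIdeal Z = ⊤) : Z = ∅ := by
  refine Set.eq_empty_iff_forall_notMem.2 fun z hz => ?_
  obtain ⟨f, -, hf, -⟩ := exists_compactSupport_apply_eq_one z
  have : f ∈ vanishingIdeal Z := h ▸ Submodule.mem_top
  exact one_ne_zero (hf.symm.trans (this z hz))

/-- For an individually eventually positive family, if the orbit of `u ≥ 0` eventually lies in the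
ideal of functions vanishing on `Z`, then, with a uniform waiting time, so do the orbits of all
elements of the closed ideal generated by `u`. -/
lemma exists_forall_map_mem_vanishingIdeal {T : ℝ → C₀(L, ℝ) →L[ℝ] C₀(L, ℝ)}
    (hep : ∀ f : C₀(L, ℝ), (∀ x : L, 0 ≤ f x) →
      ∃ t₀ : ℝ, 0 ≤ t₀ ∧ ∀ t : ℝ, t₀ ≤ t → ∀ x : L, 0 ≤ (T t f) x)
    {u : C₀(L, ℝ)} (hu : ∀ x, 0 ≤ u x) {Z : Set L} {s₀ : ℝ}
    (hs : ∀ s, s₀ ≤ s → T s u ∈ vanishingIdeal Z) :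
    ∃ t₀ : ℝ, 0 ≤ t₀ ∧ ∀ t : ℝ, t₀ ≤ t → ∀ g : C₀(L, ℝ), (∀ x, u x = 0 → g x = 0) →
      T t g ∈ vanishingIdeal Z := by
  let A : ℕ → Submodule ℝ C₀(L, ℝ) := fun n =>
    { carrier := {h | ∀ s : ℝ, (n : ℝ) ≤ s → T s (h * u) ∈ vanishingIdeal Z}
      zero_mem' := fun s _ => by simp
      add_mem' := fun {a b} ha hb s hns => by
        rw [add_mul, map_add]
        exact Submodule.add_mem _ (ha s hns) (hb s hns)
      smul_mem' := fun c a ha s hns => by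
        rw [smul_mul_assoc, map_smul]
        exact Submodule.smul_mem _ c (ha s hns) }
  have hclosed : ∀ n, IsClosed (A n : Set C₀(L, ℝ)) := fun n => by
    have : (A n : Set C₀(L, ℝ)) =
        ⋂ s : ℝ, ⋂ _ : (n : ℝ) ≤ s, (fun h => T s (h * u)) ⁻¹' (vanishingIdeal Z) := by
      ext h; simp [A]
    rw [this]
    exact isClosed_iInter fun s => isClosed_iInter fun _ => (isClosed_vanishingIdeal Z).preimage
      ((T s).continuous.comp (continuous_id.mul continuous_const))
  have hunion : ⋃ n, (A n : Set C₀(L, ℝ)) = Set.univ := by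
    refine Set.eq_univ_of_forall fun h => ?_
    have hb : ∀ x, |h x * u x| ≤ ‖h‖ * u x := fun x => by
      rw [abs_mul, abs_of_nonneg (hu x)]
      exact mul_le_mul_of_nonneg_right (h.abs_apply_le_norm x) (hu x)
    obtain ⟨a, -, ha⟩ := hep (‖h‖ • u + h * u) fun x => by
      have := (abs_le.1 (hb x)).1
      simp only [coe_add, coe_smul, coe_mul, Pi.add_apply, Pi.smul_apply, Pi.mul_apply,
        smul_eq_mul]
      linarith
    obtain ⟨b, -, hb'⟩ := hep (‖h‖ • u - h * u) fun x => by
      have := (abs_le.1 (hb x)).2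
      simp only [coe_sub, coe_smul, coe_mul, Pi.sub_apply, Pi.smul_apply, Pi.mul_apply,
        smul_eq_mul]
      linarith
    obtain ⟨n, hn⟩ := exists_nat_ge (max (max a b) s₀)
    refine Set.mem_iUnion.2 ⟨n, fun s hns z hz => ?_⟩
    have hle := hn.trans hns
    simp only [max_le_iff] at hle
    have h1 := ha s hle.1.1 z
    have h2 := hb' s hle.1.2 z
    have h3 : (T s u) z = 0 := hs s hle.2 z hz
    simp only [map_add, map_sub, map_smul, coe_add, coe_sub, coe_smul, Pi.add_apply, Pi.sub_apply,
      Pi.smul_apply, h3, smul_zero, zero_add, zero_sub] at h1 h2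
    linarith
  obtain ⟨n, hn⟩ := nonempty_interior_of_iUnion_of_closed hclosed hunion
  have htop := (A n).eq_top_of_nonempty_interior' hn
  refine ⟨n, n.cast_nonneg, fun t ht g hg => ?_⟩
  have hsub : closure (Set.range fun h : C₀(L, ℝ) => h * u) ⊆ T t ⁻¹' (vanishingIdeal Z) := by
    refine closure_minimal ?_ ((isClosed_vanishingIdeal Z).preimage (T t).continuous)
    rintro _ ⟨h, rfl⟩
    have : h ∈ A n := htop ▸ Submodule.mem_top
    exact this t ht
  exact hsub (mem_closure_range_mul g u hu hg)

end ZeroAtInftyContinuousMap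

open ZeroAtInftyContinuousMap

section Semigroup

variable {L : Type*} [TopologicalSpace L] {T : ℝ → C₀(L, ℝ) →L[ℝ] C₀(L, ℝ)}

/-- A persistently irreducible `C₀`-semigroup does not vanish eventually. -/
lemma not_eventually_zero_of_persistently_irreducible
    [LocallyCompactSpace L] [T2Space L] [Nonempty L]
    (hT0 : T 0 = 1)
    (hTadd : ∀ s t : ℝ, 0 ≤ s → 0 ≤ t → T (s + t) = (T s).comp (T t))
    (hTcont : ∀ f : C₀(L, ℝ), ContinuousOn (fun t : ℝ => T t f) (Set.Ici 0))
    (hirr : ∀ Z : Set L, (∃ t₀ : ℝ, 0 ≤ t₀ ∧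
      ∀ t : ℝ, t₀ ≤ t → ∀ f ∈ vanishingIdeal Z, T t f ∈ vanishingIdeal Z) →
      vanishingIdeal Z = ⊥ ∨ Z = ∅) {n : ℝ} (hn : 0 ≤ n) :
    ¬ ∀ t, n ≤ t → T t = 0 := by
  intro hzero
  obtain ⟨x⟩ := ‹Nonempty L›
  obtain ⟨f, -, hf, -⟩ := exists_compactSupport_apply_eq_one x
  have hbot : vanishingIdeal {x} = (⊥ : Submodule ℝ C₀(L, ℝ)) :=
    (hirr {x} ⟨n, hn, fun t ht g _ => by simp [hzero t ht]⟩).resolve_right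
      (Set.singleton_nonempty x).ne_empty
  have hspan : ∀ g : C₀(L, ℝ), g = g x • f := fun g => by
    have : g - g x • f ∈ vanishingIdeal {x} := by
      rintro _ rfl
      simp [hf]
    rw [hbot, Submodule.mem_bot] at this
    exact sub_eq_zero.1 this
  have hhalf : ∀ t, 0 ≤ t → T t f = 0 → T (t / 2) f = 0 := fun t ht h => by
    have h2 : T (t / 2) (T (t / 2) f) = 0 := by
      rw [← ContinuousLinearMap.comp_apply, ← hTadd _ _ (by positivity) (by positivity),
        add_halves, h]
    rw [hspan (T (t / 2) f), map_smul] at h2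
    have h3 : T (t / 2) f x = 0 := by simpa using congrArg (evalCLM x) h2
    rw [hspan (T (t / 2) f), h3, zero_smul]
  have hpow : ∀ k : ℕ, T (n * (1 / 2) ^ k) f = 0 := fun k => by
    induction k with
    | zero => simp [hzero n le_rfl]
    | succ k ih =>
      have := hhalf _ (by positivity) ih
      rwa [show n * (1 / 2) ^ k / 2 = n * (1 / 2 : ℝ) ^ (k + 1) by ring] at this
  have hlim : Tendsto (fun k : ℕ => n * (1 / 2 : ℝ) ^ k) atTop (nhdsWithin 0 (Set.Ici 0)) := by
    refine tendsto_nhdsWithin_iff.2 ⟨?_, Eventually.of_forall fun k => ?_⟩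
    · simpa using (tendsto_pow_atTop_nhds_zero_of_lt_one (r := (1 / 2 : ℝ)) (by norm_num)
        (by norm_num)).const_mul n
    · exact Set.mem_Ici.2 (by positivity)
  have hlim' := (hTcont f 0 Set.self_mem_Ici).tendsto.comp hlim
  have hf0 : f = 0 := by
    refine tendsto_nhds_unique (f := fun k : ℕ => T (n * (1 / 2) ^ k) f) (l := atTop) ?_ ?_
    · simpa [hT0, Function.comp_def] using hlim'
    · simp only [hpow]
      exact tendsto_const_nhds
  simp [hf0] at hf

/-- For a vector whose orbit is nonnegative from time `t₁` on, there is a single nonnegative `u`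
whose zero set is the common zero set of that orbit, and whose own orbit vanishes there. -/
lemma exists_zero_iff_orbit_zero
    (hTadd : ∀ s t : ℝ, 0 ≤ s → 0 ≤ t → T (s + t) = (T s).comp (T t))
    (hTcont : ∀ f : C₀(L, ℝ), ContinuousOn (fun t : ℝ => T t f) (Set.Ici 0))
    {f : C₀(L, ℝ)} {t₁ : ℝ} (ht₁ : 0 ≤ t₁) (hpos : ∀ t, t₁ ≤ t → ∀ x, 0 ≤ T t f x) :
    ∃ u : C₀(L, ℝ), (∀ x, 0 ≤ u x) ∧ (∀ x, u x = 0 ↔ ∀ t, t₁ ≤ t → T t f x = 0) ∧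
      ∀ s, 0 ≤ s → ∀ x, u x = 0 → T s u x = 0 := by
  let τ : ℕ → ℝ := fun k => t₁ + |TopologicalSpace.denseSeq ℝ k|
  have hτ : ∀ k, t₁ ≤ τ k := fun k => le_add_of_nonneg_right (abs_nonneg _)
  let c : ℕ → ℝ := fun k => (1 / 2) ^ k / (1 + ‖T (τ k) f‖)
  have hc : ∀ k, 0 < c k := fun k => by positivity
  have hsum : Summable fun k => c k • T (τ k) f := by
    refine Summable.of_norm_bounded (summable_geometric_of_lt_one (r := (1 / 2 : ℝ))
      (by norm_num) (by norm_num)) fun k => ?_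
    rw [norm_smul, Real.norm_of_nonneg (hc k).le, div_mul_eq_mul_div, div_le_iff₀ (by positivity)]
    have : (0 : ℝ) ≤ (1 / 2) ^ k := by positivity
    gcongr
    linarith
  have happly : ∀ x, HasSum (fun k => c k * T (τ k) f x) ((∑' k, c k • T (τ k) f) x) := fun x => by
    simpa using (evalCLM x).hasSum hsum.hasSum
  have hterm : ∀ x k, 0 ≤ c k * T (τ k) f x := fun x k =>
    mul_nonneg (hc k).le (hpos _ (hτ k) x)
  have hzero : ∀ x, (∑' k, c k • T (τ k) f) x = 0 ↔ ∀ t, t₁ ≤ t → T t f x = 0 := by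
    intro x
    constructor
    · intro hx
      have h0 := (hasSum_zero_iff_of_nonneg (hterm x)).1 (hx ▸ happly x)
      have hcont : Continuous fun r : ℝ => T (t₁ + |r|) f x :=
        (continuous_eval x).comp ((hTcont f).comp_continuous
          (continuous_const.add continuous_abs) fun r => Set.mem_Ici.2 (by positivity))
      have hall := hcont.ext_on (TopologicalSpace.denseRange_denseSeq ℝ)
        (continuous_const (y := (0 : ℝ))) (by
          rintro _ ⟨k, rfl⟩
          exact (mul_eq_zero.1 (congrFun h0 k)).resolve_left (hc k).ne')
      intro t ht
      simpa [abs_of_nonneg (sub_nonneg.2 ht)] using congrFun hall (t - t₁)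
    · intro hx
      refine (happly x).unique ?_
      simp [hx _ (hτ _), hasSum_zero]
  refine ⟨∑' k, c k • T (τ k) f, fun x => (happly x).nonneg (hterm x), hzero, ?_⟩
  intro s hs x hx
  have hx' := (hzero x).1 hx
  have h1 := ((evalCLM x).comp (T s)).hasSum hsum.hasSum
  refine h1.unique ?_
  have : ∀ k, ((evalCLM x).comp (T s)) (c k • T (τ k) f) = 0 := fun k => by
    have h2 : T s (T (τ k) f) x = 0 := by
      rw [← ContinuousLinearMap.comp_apply, ← hTadd s _ hs (ht₁.trans (hτ k))]
      exact hx' _ (by linarith [hτ k])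
    simp [h2]
  simp only [this]
  exact hasSum_zero

/-- If the operator `T 1` is quasi-nilpotent, then orbits decay faster than any exponential. -/
lemma exists_norm_apply_le_mul_pow_floor
    (hT0 : T 0 = 1)
    (hTadd : ∀ s t : ℝ, 0 ≤ s → 0 ≤ t → T (s + t) = (T s).comp (T t))
    (hTcont : ∀ f : C₀(L, ℝ), ContinuousOn (fun t : ℝ => T t f) (Set.Ici 0))
    (hnil : Tendsto (fun n : ℕ => ‖(T 1) ^ n‖ ^ (1 / (n : ℝ))) atTop (nhds 0))
    (h : C₀(L, ℝ)) {ε : ℝ} (hε : 0 < ε) :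
    ∃ C : ℝ, 0 ≤ C ∧ ∀ t : ℝ, 0 ≤ t → ‖T t h‖ ≤ C * ε ^ ⌊t⌋₊ := by
  have hpow : ∀ n : ℕ, T n = (T 1) ^ n := fun n => by
    induction n with
    | zero => simp [hT0]
    | succ n ih =>
      rw [Nat.cast_succ, hTadd _ _ n.cast_nonneg zero_le_one, ih, pow_succ]
      rfl
  obtain ⟨B, hB⟩ : ∃ B : ℝ, ∀ n : ℕ, ‖(T 1) ^ n‖ / ε ^ n ≤ B := by
    have hev : ∀ᶠ n : ℕ in atTop, ‖(T 1) ^ n‖ / ε ^ n ≤ 1 := by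
      filter_upwards [hnil.eventually (gt_mem_nhds hε), eventually_ne_atTop 0] with n hn hn0
      rw [div_le_one (by positivity)]
      calc ‖(T 1) ^ n‖ = (‖(T 1) ^ n‖ ^ (1 / (n : ℝ))) ^ n := by
            rw [one_div]
            exact (Real.rpow_inv_natCast_pow (norm_nonneg ((T 1) ^ n)) hn0).symm
        _ ≤ ε ^ n := by gcongr
    obtain ⟨N, hN⟩ := eventually_atTop.1 hev
    refine ⟨1 + ∑ n ∈ Finset.range N, ‖(T 1) ^ n‖ / ε ^ n, fun n => ?_⟩
    have hnn : ∀ n ∈ Finset.range N, 0 ≤ ‖(T 1) ^ n‖ / ε ^ n := fun n _ => by positivity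
    rcases le_or_gt N n with hle | hlt
    · linarith [hN n hle, Finset.sum_nonneg hnn]
    · linarith [Finset.single_le_sum hnn (Finset.mem_range.2 hlt)]
  obtain ⟨M, hM⟩ := isCompact_Icc.exists_bound_of_continuousOn
    ((hTcont h).mono (Set.Icc_subset_Ici_self (a := (1 : ℝ)) (b := 0)))
  have hM0 : 0 ≤ M := (norm_nonneg _).trans (hM 0 (by simp))
  have hB0 : 0 ≤ B := le_trans (by positivity) (hB 0)
  refine ⟨B * M, by positivity, fun t ht => ?_⟩
  have hfl := Nat.floor_le ht
  have hfl' := Nat.lt_floor_add_one t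
  have hsplit : T t h = ((T 1) ^ ⌊t⌋₊) (T (t - ⌊t⌋₊) h) := by
    rw [← hpow, ← ContinuousLinearMap.comp_apply, ← hTadd _ _ (Nat.cast_nonneg _) (by linarith),
      add_sub_cancel]
  have h1 := (div_le_iff₀ (by positivity)).1 (hB ⌊t⌋₊)
  calc ‖T t h‖ ≤ ‖(T 1) ^ ⌊t⌋₊‖ * ‖T (t - ⌊t⌋₊) h‖ := by
        rw [hsplit]; exact ContinuousLinearMap.le_opNorm _ _
    _ ≤ (B * ε ^ ⌊t⌋₊) * M := by
        gcongr
        exact hM _ ⟨by linarith, by linarith⟩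
    _ = B * M * ε ^ ⌊t⌋₊ := by ring

/-- A function on `[0, ∞)` which decays faster than any exponential and is dominated by a finite
sum of its translates to the right by at least `1` vanishes at `0`. -/
lemma nonpos_of_le_sum_translates {b : ℝ → ℝ} {F : Finset ℝ} {c : ℝ} (hc : 0 < c)
    (hF : ∀ a ∈ F, 1 ≤ a) (hb : ∀ t, 0 ≤ t → c * b t ≤ ∑ a ∈ F, b (a + t))
    (hdecay : ∀ ε : ℝ, 0 < ε → ∃ C : ℝ, 0 ≤ C ∧ ∀ t : ℝ, 0 ≤ t → b t ≤ C * ε ^ ⌊t⌋₊) :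
    b 0 ≤ 0 := by
  set ε : ℝ := min 1 (c / (2 * (F.card + 1))) with hεdef
  have hε : 0 < ε := by positivity
  have hε1 : ε ≤ 1 := min_le_left _ _
  have hεc : F.card * ε ≤ c * (1 / 2) := by
    have h1 : ε ≤ c / (2 * (F.card + 1)) := min_le_right _ _
    rw [le_div_iff₀ (by positivity)] at h1
    nlinarith
  obtain ⟨C, hC, hCb⟩ := hdecay ε hε
  have key : ∀ n : ℕ, ∀ t, 0 ≤ t → b t ≤ C * (1 / 2) ^ n * ε ^ ⌊t⌋₊ := by
    intro n
    induction n with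
    | zero => simpa using hCb
    | succ n ih =>
      intro t ht
      refine le_of_mul_le_mul_left ?_ hc
      calc c * b t ≤ ∑ a ∈ F, b (a + t) := hb t ht
        _ ≤ ∑ a ∈ F, C * (1 / 2) ^ n * ε ^ (⌊t⌋₊ + 1) := by
            refine Finset.sum_le_sum fun a ha => ?_
            have ha1 := hF a ha
            refine (ih (a + t) (by linarith)).trans ?_
            refine mul_le_mul_of_nonneg_left ?_ (by positivity)
            refine pow_le_pow_of_le_one hε.le hε1 ?_
            rw [← Nat.floor_add_one ht]
            exact Nat.floor_mono (by linarith)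
        _ = (F.card * ε) * (C * (1 / 2) ^ n * ε ^ ⌊t⌋₊) := by
            rw [Finset.sum_const, nsmul_eq_mul]; ring
        _ ≤ (c * (1 / 2)) * (C * (1 / 2) ^ n * ε ^ ⌊t⌋₊) := by gcongr
        _ = c * (C * (1 / 2) ^ (n + 1) * ε ^ ⌊t⌋₊) := by ring
  have hlim : Tendsto (fun n : ℕ => C * (1 / 2 : ℝ) ^ n) atTop (nhds 0) := by
    simpa using (tendsto_pow_atTop_nhds_zero_of_lt_one (r := (1 / 2 : ℝ)) (by norm_num)
      (by norm_num)).const_mul C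
  exact ge_of_tendsto' hlim fun n => by simpa using key n 0 le_rfl

/-- If nonnegative functions have no common zero and `f` has compact support, then some positive
multiple of `f` lies below the sum of finitely many of them. -/
lemma exists_finset_sum_ge {ι : Type*} {f : C₀(L, ℝ)}
    (hfc : HasCompactSupport f) {v : ι → C₀(L, ℝ)} {P : Set ι}
    (hv : ∀ a ∈ P, ∀ x, 0 ≤ v a x) (hcover : ∀ x, ∃ a ∈ P, v a x ≠ 0) :
    ∃ F : Finset ι, (∀ a ∈ F, a ∈ P) ∧ ∃ c : ℝ, 0 < c ∧ ∀ x, c * f x ≤ ∑ a ∈ F, v a x := by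
  classical
  obtain ⟨F, hFP, hFcov⟩ := hfc.isCompact.elim_finite_subcover_image (b := P)
    (c := fun a => {x | v a x ≠ 0})
    (fun a _ => isOpen_ne_fun (map_continuous (v a)) continuous_const)
    (fun x _ => by
      obtain ⟨a, ha, hax⟩ := hcover x
      exact Set.mem_biUnion ha hax)
  obtain ⟨hFfin, hFcov⟩ := hFcov
  lift F to Finset ι using hFfin
  have hFP' : ∀ a ∈ F, a ∈ P := fun a ha => hFP ha
  have hnn : ∀ x, 0 ≤ ∑ a ∈ F, v a x := fun x => Finset.sum_nonneg fun a ha => hv a (hFP' a ha) x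
  refine ⟨F, hFP', ?_⟩
  obtain ⟨m, hm, hmv⟩ : ∃ m : ℝ, 0 < m ∧ ∀ x ∈ tsupport f, m ≤ ∑ a ∈ F, v a x := by
    rcases Set.eq_empty_or_nonempty (tsupport f) with he | hne
    · exact ⟨1, one_pos, fun x hx => by simp [he] at hx⟩
    · obtain ⟨y, hy, hmin⟩ := hfc.isCompact.exists_isMinOn hne
        (f := fun x => ∑ a ∈ F, v a x)
        (continuous_finsetSum F fun a _ => map_continuous (v a)).continuousOn
      refine ⟨∑ a ∈ F, v a y, ?_, fun x hx => hmin hx⟩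
      obtain ⟨a, ha, hay⟩ := Set.mem_iUnion₂.1 (hFcov hy)
      exact Finset.sum_pos' (fun a ha => hv a (hFP' a ha) y)
        ⟨a, ha, (hv a (hFP' a ha) y).lt_of_ne (Ne.symm hay)⟩
  refine ⟨m / (‖f‖ + 1), by positivity, fun x => ?_⟩
  by_cases hx : x ∈ tsupport f
  · refine le_trans ?_ (hmv x hx)
    rw [div_mul_eq_mul_div, div_le_iff₀ (by positivity)]
    have := (le_abs_self _).trans (f.abs_apply_le_norm x)
    gcongr
    linarith
  · rw [image_eq_zero_of_notMem_tsupport hx, mul_zero]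
    exact hnn x

end Semigroup

/-- Let `L` be a non-empty locally compact Hausdorff space and `(T t)_{t ≥ 0}` a
`C₀`-semigroup on `C₀(L, ℝ)` (with pointwise order) that is individually eventually
positive and persistently irreducible.  Then there exists `s > 0` such that the operator
`T s` has non-zero spectral radius, i.e. the Gelfand limit `lim ‖(T s)^n‖^{1/n}` (which
exists and equals the spectral radius) is strictly positive. -/
theorem persistently_irreducible_eventually_positive_semigroup_on_C0_has_positive_spectral_radius
    {L : Type*} [TopologicalSpace L] [LocallyCompactSpace L] [T2Space L] [Nonempty L]
    (T : ℝ → C₀(L, ℝ) →L[ℝ] C₀(L, ℝ))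
    (hT0 : T 0 = 1)
    (hTadd : ∀ s t : ℝ, 0 ≤ s → 0 ≤ t → T (s + t) = (T s).comp (T t))
    (hTcont : ∀ f : C₀(L, ℝ), ContinuousOn (fun t : ℝ => T t f) (Set.Ici 0))
    -- individual eventual positivity (positivity taken pointwise):
    (hep : ∀ f : C₀(L, ℝ), (∀ x : L, 0 ≤ f x) →
      ∃ t₀ : ℝ, 0 ≤ t₀ ∧ ∀ t : ℝ, t₀ ≤ t → ∀ x : L, 0 ≤ (T t f) x)
    -- persistent irreducibility: the only closed ideals that are eventually invariant
    -- are `{0}` and the whole space: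
    (hirr : ∀ I : Submodule ℝ C₀(L, ℝ), IsClosed (I : Set C₀(L, ℝ)) →
      (∀ f g : C₀(L, ℝ), (∀ x : L, |f x| ≤ |g x|) → g ∈ I → f ∈ I) →
      (∃ t₀ : ℝ, 0 ≤ t₀ ∧ ∀ t : ℝ, t₀ ≤ t → ∀ f ∈ I, T t f ∈ I) →
      I = ⊥ ∨ I = ⊤) :
    ∃ s : ℝ, 0 < s ∧ ∀ r : ℝ,
      Tendsto (fun n : ℕ => ‖(T s) ^ n‖ ^ (1 / (n : ℝ))) atTop (nhds r) → 0 < r := by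
  have hirrZ : ∀ Z : Set L, (∃ t₀ : ℝ, 0 ≤ t₀ ∧
      ∀ t : ℝ, t₀ ≤ t → ∀ f ∈ vanishingIdeal Z, T t f ∈ vanishingIdeal Z) →
      vanishingIdeal Z = ⊥ ∨ Z = ∅ := fun Z hZ =>
    (hirr (vanishingIdeal Z) (isClosed_vanishingIdeal Z)
      (fun _ _ => mem_vanishingIdeal_of_abs_le) hZ).imp_right vanishingIdeal_eq_top
  refine ⟨1, one_pos, fun r hr => ?_⟩
  by_contra hr0
  have hr' : r = 0 := le_antisymm (not_lt.1 hr0)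
    (ge_of_tendsto' hr fun n => by positivity)
  subst hr'
  obtain ⟨x₀⟩ := ‹Nonempty L›
  obtain ⟨f, hf, hfx, hfc⟩ := exists_compactSupport_apply_eq_one x₀
  have hf0 : f ∉ (⊥ : Submodule ℝ C₀(L, ℝ)) := fun h => by
    rw [Submodule.mem_bot] at h
    simp [h] at hfx
  have hTapp : ∀ s t : ℝ, 0 ≤ s → 0 ≤ t → ∀ g, T (s + t) g = T s (T t g) :=
    fun s t hs ht g => by rw [hTadd s t hs ht]; rfl
  have hne : ∀ t, 0 ≤ t → T t f ≠ 0 := by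
    intro t ht h0
    have hvan : ∀ s, t ≤ s → T s f ∈ vanishingIdeal (Set.univ : Set L) := fun s hs => by
      rw [← sub_add_cancel s t, hTapp _ _ (sub_nonneg.2 hs) ht, h0, map_zero]
      exact Submodule.zero_mem _
    obtain ⟨n, hn, hnT⟩ := exists_forall_map_mem_vanishingIdeal hep hf hvan
    simp only [vanishingIdeal_univ, Submodule.mem_bot] at hnT
    have hempty : {x | f x = 0} = ∅ := (hirrZ {x | f x = 0} ⟨n, hn, fun s hs g hg => by
      rw [hnT s hs g hg]
      exact Submodule.zero_mem _⟩).resolve_left fun hbot => hf0 (hbot ▸ fun _ hz => hz)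
    refine not_eventually_zero_of_persistently_irreducible hT0 hTadd hTcont hirrZ hn
      fun s hs => ContinuousLinearMap.ext fun g => hnT s hs g fun x hx => ?_
    exact absurd hx (Set.eq_empty_iff_forall_notMem.1 hempty x)
  obtain ⟨t₀, ht₀, hpos₀⟩ := hep f hf
  set t₁ := max t₀ 1
  have ht₁ : 0 ≤ t₁ := ht₀.trans (le_max_left _ _)
  have hpos : ∀ t, t₁ ≤ t → ∀ x, 0 ≤ T t f x := fun t ht => hpos₀ t ((le_max_left _ _).trans ht)
  have hcover : ∀ x, ∃ a ∈ Set.Ici t₁, T a f x ≠ 0 := by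
    obtain ⟨u, hu, huz, huT⟩ := exists_zero_iff_orbit_zero hTadd hTcont ht₁ hpos
    have hvan : ∀ s, 0 ≤ s → T s u ∈ vanishingIdeal {x | u x = 0} := fun s hs x hx => huT s hs x hx
    have hinv := exists_forall_map_mem_vanishingIdeal hep hu hvan
    rcases hirrZ {x | u x = 0} hinv with hbot | hempty
    · have : T t₁ f ∈ vanishingIdeal {x | u x = 0} := fun x hx => (huz x).1 hx t₁ le_rfl
      rw [hbot, Submodule.mem_bot] at this
      exact absurd this (hne t₁ ht₁)
    · intro x
      by_contra! hx
      exact Set.eq_empty_iff_forall_notMem.1 hempty x ((huz x).2 hx)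
  obtain ⟨F, hF, c, hc, hsum⟩ := exists_finset_sum_ge hfc (v := fun a => T a f) hpos hcover
  obtain ⟨t₂, ht₂, hpos₂⟩ := hep ((∑ a ∈ F, T a) f - c • f) fun x => by
    have h1 : (∑ a ∈ F, T a) f x = ∑ a ∈ F, T a f x := by
      rw [sum_apply, ← evalCLM_apply, map_sum]
      rfl
    have := hsum x
    simp only [coe_sub, coe_smul, Pi.sub_apply, Pi.smul_apply, smul_eq_mul, h1]
    linarith
  set t₃ := max t₁ t₂
  have ht₃ : 0 ≤ t₃ := ht₁.trans (le_max_left _ _)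
  have hF1 : ∀ a ∈ F, 1 ≤ a := fun a ha => (le_max_right t₀ 1).trans (hF a ha)
  have hdom : ∀ t, 0 ≤ t → c * ‖T t (T t₃ f)‖ ≤ ∑ a ∈ F, ‖T (a + t) (T t₃ f)‖ := by
    intro t ht
    have hle : ∀ x, c * T t (T t₃ f) x ≤ ∑ a ∈ F, T (a + t) (T t₃ f) x := fun x => by
      have h1 := hpos₂ (t + t₃) (by linarith [le_max_right t₁ t₂]) x
      have h2 : T (t + t₃) ((∑ a ∈ F, T a) f) x = ∑ a ∈ F, T (a + t) (T t₃ f) x := by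
        rw [sum_apply, map_sum, ← evalCLM_apply, map_sum]
        refine Finset.sum_congr rfl fun a ha => ?_
        have ha0 : 0 ≤ a := zero_le_one.trans (hF1 a ha)
        rw [evalCLM_apply, ← hTapp _ _ (by positivity) ha0, ← hTapp _ _ (by positivity) ht₃]
        congr 2
        ring_nf
      rw [map_sub, map_smul, coe_sub, Pi.sub_apply, h2, coe_smul, Pi.smul_apply, smul_eq_mul,
        hTapp t t₃ ht ht₃] at h1
      linarith
    have hnorm : ‖T t (T t₃ f)‖ ≤ (∑ a ∈ F, ‖T (a + t) (T t₃ f)‖) / c := by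
      refine norm_le_of_forall_abs_le _ (by positivity) fun x => ?_
      have hnn : 0 ≤ T t (T t₃ f) x := by
        rw [← hTapp t t₃ ht ht₃]
        exact hpos _ (by linarith [le_max_left t₁ t₂]) x
      rw [abs_of_nonneg hnn, le_div_iff₀' hc]
      exact (hle x).trans (Finset.sum_le_sum fun a _ =>
        (le_abs_self _).trans (abs_apply_le_norm _ x))
    rwa [le_div_iff₀' hc] at hnorm
  have hzero := nonpos_of_le_sum_translates (b := fun t => ‖T t (T t₃ f)‖) hc hF1 hdom
    fun ε hε => exists_norm_apply_le_mul_pow_floor hT0 hTadd hTcont hr _ hε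
  simp only [hT0, one_apply_eq_self, norm_le_zero_iff] at hzero
  exact hne t₃ ht₃ hzero
end
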